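/- arXiv:math/0210074 — 5 statements merged into one kernel-verified Lean document; each statement's English description precedes it below -/
import Mathlib

section
/- Let (R,m) be a local integral domain, let A and B be ideals of R, and let α ∈ R be a nonzero element with A·B ⊆ αR. If A is not a principal ideal, then A·B ⊆ α·m. -/
/-- Let `(R,m)` be a local integral domain, let `A` and `B` be ideals of
`R`, and let `α ∈ R` be a nonzero element with `A·B ⊆ αR`. If `A` is not a principal
ideal, then `A·B ⊆ α·m`. -/
theorem stmt1 {R : Type*} [CommRing R] [IsLocalRing R] [IsDomain R]
    (A B : Ideal R) (α : R) (hα : α ≠ 0)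
    (hAB : A * B ≤ Ideal.span {α})
    (hA : ¬ A.IsPrincipal) :
    A * B ≤ Ideal.span {α} * IsLocalRing.maximalIdeal R := by
  rw [Ideal.mul_le]
  intro a ha b hb
  obtain ⟨c, hc⟩ := Ideal.mem_span_singleton.mp (hAB (Ideal.mul_mem_mul ha hb))
  rw [hc]
  refine Ideal.mul_mem_mul (Ideal.mem_span_singleton_self α) ?_
  rw [IsLocalRing.mem_maximalIdeal, mem_nonunits_iff]
  rintro ⟨u, rfl⟩
  -- If `a * b = α * u` with `u` a unit, then `A = aR`: for `x ∈ A` write `x * b = α * d`;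
  -- cancelling `b` gives `x = a * (u⁻¹ * d)`.
  have hb0 : b ≠ 0 := by
    rintro rfl
    exact mul_ne_zero hα u.ne_zero (by rw [← hc, mul_zero])
  refine hA ⟨a, le_antisymm (fun x hx => ?_) ((Ideal.span_singleton_le_iff_mem A).mpr ha)⟩
  obtain ⟨d, hd⟩ := Ideal.mem_span_singleton.mp (hAB (Ideal.mul_mem_mul hx hb))
  refine Ideal.mem_span_singleton.mpr ⟨↑u⁻¹ * d, mul_right_cancel₀ hb0 ?_⟩
  calc x * b = α * d * (u * ↑u⁻¹) := by rw [hd, Units.mul_inv, mul_one]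
    _ = (α * u) * (↑u⁻¹ * d) := by ring
    _ = a * (↑u⁻¹ * d) * b := by rw [← hc]; ring
end

section
/- Let (R,m) be a Noetherian normal local domain and let J be an ideal of pure height one. Let n ≥ 2 be an integer such that the n-th symbolic power J^{(n)} is a principal ideal αR for some nonzero α ∈ R, while J^{(i)} is not principal for 0 < i < n. Then for all integers i with 0 < i < n one has J^{(i)} · J^{(n−i)} ⊆ J^{(n)}·m = α·m. -/
/-!
Since `J^{(i)} J^{(n-i)} ⊆ J^{(n)} = αR`, a product `ab` with `a ∈ J^{(i)}`, `b ∈ J^{(n-i)}` that is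
not in `αm` equals `α` times a unit, so `αR = abR`. Then `xb ∈ abR` for every `x ∈ J^{(i)}`, and
cancelling `b` gives `J^{(i)} = aR`, contradicting that `J^{(i)}` is not principal.
-/

/-- The `i`-th symbolic power of an ideal `J` of pure height one:
`J^{(i)} = {x ∈ R : x ∈ Jⁱ·R_P for every height-one prime ideal P of R}`, realized as
the intersection of the contractions of `Jⁱ·R_P` along `R → R_P` over all height-one
primes `P`. -/
def symbolicPower {R : Type*} [CommRing R] (J : Ideal R) (i : ℕ) : Ideal R :=
  sInf {I : Ideal R | ∃ (P : Ideal R) (hP : P.IsPrime),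
    Order.height (⟨P, hP⟩ : PrimeSpectrum R) = 1 ∧
    I = Ideal.comap (algebraMap R (Localization (@Ideal.primeCompl R _ P hP)))
      (Ideal.map (algebraMap R (Localization (@Ideal.primeCompl R _ P hP))) (J ^ i))}

/-- An ideal `J` of `R` has pure height one if every associated prime of `R/J`
has height one. -/
def IsPureHeightOne {R : Type*} [CommRing R] (J : Ideal R) : Prop :=
  ∀ P ∈ associatedPrimes R (R ⧸ J), ∀ (hP : Ideal.IsPrime P),
    Order.height (⟨P, hP⟩ : PrimeSpectrum R) = 1

theorem symbolicPower_mul_le {R : Type*} [CommRing R] (J : Ideal R) (i j : ℕ) :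
    symbolicPower J i * symbolicPower J j ≤ symbolicPower J (i + j) := by
  refine le_sInf ?_
  rintro _ ⟨P, hP, hht, rfl⟩
  rw [Ideal.mul_le]
  intro a ha b hb
  have ha' := (Submodule.mem_sInf.mp ha) _ ⟨P, hP, hht, rfl⟩
  have hb' := (Submodule.mem_sInf.mp hb) _ ⟨P, hP, hht, rfl⟩
  rw [Ideal.mem_comap] at ha' hb' ⊢
  rw [map_mul, pow_add, Ideal.map_mul]
  exact Ideal.mul_mem_mul ha' hb'

/-- Let `(R,m)` be a Noetherian normal local domain and let `J` be an ideal
of pure height one. Let `n ≥ 2` be an integer such that the `n`-th symbolic power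
`J^{(n)}` is a principal ideal `αR` for some nonzero `α ∈ R`, while `J^{(i)}` is not
principal for `0 < i < n`. Then for all integers `i` with `0 < i < n` one has
`J^{(i)} · J^{(n−i)} ⊆ J^{(n)}·m = α·m`. -/
theorem stmt2 {R : Type*} [CommRing R] [IsNoetherianRing R] [IsLocalRing R] [IsDomain R]
    [IsIntegrallyClosed R]
    (J : Ideal R) (hJ : IsPureHeightOne J)
    (n : ℕ) (hn : 2 ≤ n) (α : R) (hα : α ≠ 0)
    (hprin : symbolicPower J n = Ideal.span {α})
    (hnotprin : ∀ i : ℕ, 0 < i → i < n → ¬ (symbolicPower J i).IsPrincipal) :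
    ∀ i : ℕ, 0 < i → i < n →
      symbolicPower J i * symbolicPower J (n - i)
        ≤ symbolicPower J n * IsLocalRing.maximalIdeal R
      ∧ symbolicPower J n * IsLocalRing.maximalIdeal R
        = Ideal.span {α} * IsLocalRing.maximalIdeal R := by
  intro i hi hin
  refine ⟨?_, by rw [hprin]⟩
  have hle : symbolicPower J i * symbolicPower J (n - i) ≤ Ideal.span {α} := by
    have h := symbolicPower_mul_le J i (n - i)
    rwa [Nat.add_sub_cancel' hin.le, hprin] at h
  rw [hprin, Ideal.mul_le]
  intro a ha b hb
  obtain ⟨c, hc⟩ := Ideal.mem_span_singleton.mp (hle (Ideal.mul_mem_mul ha hb))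
  rw [hc]
  refine Ideal.mul_mem_mul (Ideal.mem_span_singleton_self α) ?_
  by_contra hcm
  have hcu : IsUnit c := by
    rwa [IsLocalRing.mem_maximalIdeal, mem_nonunits_iff, not_not] at hcm
  have hb0 : b ≠ 0 := by
    rintro rfl
    rw [mul_zero] at hc
    exact mul_ne_zero hα hcu.ne_zero hc.symm
  refine hnotprin i hi hin ⟨a, le_antisymm (fun x hx => ?_) ?_⟩
  · have hx' : α ∣ x * b := Ideal.mem_span_singleton.mp (hle (Ideal.mul_mem_mul hx hb))
    have hab : a * b ∣ x * b := by rw [hc]; exact hcu.mul_right_dvd.mpr hx'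
    exact Ideal.mem_span_singleton.mpr ((mul_dvd_mul_iff_right hb0).mp hab)
  · exact (Ideal.span_singleton_le_iff_mem _).mpr ha
end

section
/- Let R be a Noetherian normal domain, let J be a nonzero ideal of R of pure height one, and let y₁ be a nonzero element of J. Then there exist an element y₂ ∈ R that lies in no minimal prime of the ideal y₁R, and an element γ ∈ J, such that y₂^i · J^{(i)} ⊆ γ^i R for all positive integers i. -/
/-- If a prime `P` of a Noetherian normal domain is the colon `(bR : c)` with `b ≠ 0`, then
`P R_P` is principal. Otherwise multiplication by `c / b` would preserve `P`, making `c / b`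
integral over `R`, so that `c ∈ bR` and `P = R`. -/
theorem exists_mul_mem_span_of_colon {R : Type*} [CommRing R] [IsNoetherianRing R] [IsDomain R]
    [IsIntegrallyClosed R] {P : Ideal R} (hP : P.IsPrime) {b c : R} (hb : b ≠ 0)
    (hc : ∀ r, r ∈ P ↔ b ∣ r * c) :
    ∃ t ∈ P, ∃ s ∉ P, ∀ p ∈ P, t ∣ s * p := by
  have hbP : b ∈ P := (hc b).2 (dvd_mul_right _ _)
  have hbc : ¬ b ∣ c := fun h => hP.ne_top ((Ideal.eq_top_iff_one P).2 ((hc 1).2 (by simpa using h)))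
  by_cases H : ∃ t ∈ P, ∃ s ∉ P, t * c = b * s
  · obtain ⟨t, ht, s, hs, hts⟩ := H
    refine ⟨t, ht, s, hs, fun p hp => ?_⟩
    obtain ⟨k, hk⟩ := (hc p).1 hp
    refine ⟨k, mul_left_cancel₀ hb ?_⟩
    linear_combination (-p) * hts + t * hk
  · exfalso
    push Not at H
    let K := FractionRing R
    have hbK : algebraMap R K b ≠ 0 := by simpa using hb
    let M : Submodule R K := Submodule.map (Algebra.linearMap R K) P
    have hx : ∀ y ∈ M, (algebraMap R K c / algebraMap R K b) * y ∈ M := by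
      rintro _ ⟨p, hp, rfl⟩
      obtain ⟨k, hk⟩ := (hc p).1 hp
      refine ⟨k, by_contra fun hkP => H p hp k hkP hk, ?_⟩
      have := congrArg (algebraMap R K) hk
      simp only [map_mul] at this
      simp only [Algebra.linearMap_apply]
      rw [div_mul_eq_mul_div, eq_div_iff hbK]
      linear_combination -this
    have hint := isIntegral_of_smul_mem_submodule M
      ((Submodule.ne_bot_iff _).2 ⟨_, ⟨b, hbP, rfl⟩, hbK⟩)
      (Submodule.FG.map _ (IsNoetherian.noetherian _)) (algebraMap R K c / algebraMap R K b) hx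
    obtain ⟨y, e⟩ := IsIntegrallyClosed.algebraMap_eq_of_integral hint
    refine hbc ⟨y, IsFractionRing.injective R K ?_⟩
    rw [map_mul, e, mul_div_cancel₀ _ hbK]

theorem height_eq_one_of_colon {R : Type*} [CommRing R] [IsNoetherianRing R] [IsDomain R]
    [IsIntegrallyClosed R] {P : Ideal R} (hP : P.IsPrime) {b c : R} (hb : b ≠ 0)
    (hc : ∀ r, r ∈ P ↔ b ∣ r * c) :
    Order.height (⟨P, hP⟩ : PrimeSpectrum R) = 1 := by
  obtain ⟨t, ht, s, hs, h⟩ := exists_mul_mem_span_of_colon hP hb hc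
  have hbP : b ∈ P := (hc b).2 (dvd_mul_right _ _)
  have hmin : P ∈ (Ideal.span {t}).minimalPrimes := by
    refine ⟨⟨hP, by simpa [Ideal.span_le] using ht⟩, ?_⟩
    rintro Q ⟨hQ, htQ⟩ hQP p hp
    have : s * p ∈ Q := htQ (Ideal.mem_span_singleton.2 (h p hp))
    exact (hQ.mem_or_mem this).resolve_left fun h' => hs (hQP h')
  have h1 := Ideal.height_le_one_of_isPrincipal_of_mem_minimalPrimes _ P hmin
  have h0 : P.height ≠ 0 := by
    rw [Ne, Ideal.height_eq_zero_iff_eq_bot]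
    rintro rfl
    exact hb hbP
  have h2 : P.height = 1 := le_antisymm h1 (Order.one_le_iff_ne_zero.2 h0)
  exact (PrimeSpectrum.height_eq_orderHeight ⟨P, hP⟩).symm.trans h2

/-- A nonzero principal ideal of a Noetherian normal domain is determined at height-one primes. -/
theorem dvd_of_forall_height_one {R : Type*} [CommRing R] [IsNoetherianRing R] [IsDomain R]
    [IsIntegrallyClosed R] {b x : R} (hb : b ≠ 0)
    (h : ∀ (P : Ideal R) (hP : P.IsPrime), Order.height (⟨P, hP⟩ : PrimeSpectrum R) = 1 →
      ∃ s ∉ P, b ∣ s * x) : b ∣ x := by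
  by_contra hx
  have hx0 : (Ideal.Quotient.mk (Ideal.span {b}) x) ≠ 0 := by
    rwa [Ne, Ideal.Quotient.eq_zero_iff_mem, Ideal.mem_span_singleton]
  obtain ⟨P, hPass, hle⟩ := exists_le_isAssociatedPrime_of_isNoetherianRing R _ hx0
  obtain ⟨hP, y, hy⟩ := isAssociatedPrime_iff.1 hPass
  obtain ⟨c, rfl⟩ := Ideal.Quotient.mk_surjective y
  have key : ∀ (z r : R), r ∈ (⊥ : Submodule R (R ⧸ Ideal.span {b})).colon
      {Ideal.Quotient.mk (Ideal.span {b}) z} ↔ b ∣ r * z := fun z r => by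
    rw [Submodule.mem_colon_singleton, Submodule.mem_bot, ← Ideal.mem_span_singleton,
      ← Ideal.Quotient.eq_zero_iff_mem, map_mul]
    rfl
  obtain ⟨s, hs, hsx⟩ := h P hP (height_eq_one_of_colon hP hb fun r => by rw [hy, key])
  exact hs (hle ((key _ _).2 hsx))

/-- At a minimal prime `P` of a nonzero principal ideal, `J R_P` is generated by a single element
of `J`, and finite generation of `J` yields one denominator `u ∉ P` for all of `J`. -/
theorem exists_local_generator {R : Type*} [CommRing R] [IsNoetherianRing R] [IsDomain R]
    [IsIntegrallyClosed R] (J : Ideal R) {y : R} (hy : y ≠ 0) {P : Ideal R}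
    (hPy : P ∈ (Ideal.span {y}).minimalPrimes) :
    ∃ g ∈ J, ∃ u ∉ P, ∀ j ∈ J, g ∣ u * j := by
  have hP : P.IsPrime := hPy.1.1
  have hass : P ∈ associatedPrimes R (R ⧸ Ideal.span {y}) := by
    apply Module.associatedPrimes.minimalPrimes_annihilator_subset_associatedPrimes
    rwa [Ideal.annihilator_quotient]
  obtain ⟨_, z, hz⟩ := isAssociatedPrime_iff.1 hass
  obtain ⟨c, rfl⟩ := Ideal.Quotient.mk_surjective z
  obtain ⟨t, ht, s, hs, hts⟩ := exists_mul_mem_span_of_colon hP hy (c := c) fun r => by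
    rw [hz, Submodule.mem_colon_singleton, Submodule.mem_bot, ← Ideal.mem_span_singleton,
      ← Ideal.Quotient.eq_zero_iff_mem, map_mul]
    rfl
  let L := Localization.AtPrime P
  have : IsNoetherianRing L := IsLocalization.isNoetherianRing P.primeCompl L inferInstance
  have hmax : (IsLocalRing.maximalIdeal L).IsPrincipal := by
    refine ⟨algebraMap R L t, le_antisymm ?_ ?_⟩
    · rw [← Localization.AtPrime.map_eq_maximalIdeal, Ideal.map_le_iff_le_comap]
      intro p hp
      obtain ⟨k, hk⟩ := hts p hp
      rw [Ideal.mem_comap, Ideal.submodule_span_eq,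
        ← Ideal.unit_mul_mem_iff_mem _ (IsLocalization.map_units L (⟨s, hs⟩ : P.primeCompl)),
        ← map_mul, hk, map_mul]
      exact Ideal.mul_mem_right _ _ (Ideal.mem_span_singleton_self _)
    · rw [← Localization.AtPrime.map_eq_maximalIdeal, Ideal.submodule_span_eq, Ideal.span_le,
        Set.singleton_subset_iff]
      exact Ideal.mem_map_of_mem _ ht
  have hpid : IsPrincipalIdealRing L :=
    ((tfae_of_isNoetherianRing_of_isLocalRing_of_isDomain L).out 4 0).1 hmax
  obtain ⟨w, hw⟩ := (hpid.principal (J.map (algebraMap R L))).principal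
  rw [Ideal.submodule_span_eq] at hw
  have hwJ : w ∈ J.map (algebraMap R L) := hw ▸ Ideal.mem_span_singleton_self w
  obtain ⟨⟨g, d⟩, hgd⟩ := (IsLocalization.mem_map_algebraMap_iff P.primeCompl L).1 hwJ
  have hgen : ∀ j ∈ J, ∃ u ∉ P, (g : R) ∣ u * j := by
    intro j hj
    have hjm : algebraMap R L j ∈ (Ideal.span {(g : R)}).map (algebraMap R L) := by
      have := Ideal.mem_map_of_mem (algebraMap R L) hj
      rw [hw, Ideal.mem_span_singleton] at this
      rw [Ideal.map_span, Set.image_singleton, Ideal.mem_span_singleton, ← hgd]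
      exact (IsLocalization.map_units L d).mul_right_dvd.2 this
    obtain ⟨u, hu, huj⟩ :=
      (IsLocalization.algebraMap_mem_map_algebraMap_iff P.primeCompl L _ _).1 hjm
    exact ⟨u, hu, Ideal.mem_span_singleton.1 huj⟩
  choose! u huP hug using hgen
  obtain ⟨S, hS⟩ := IsNoetherian.noetherian J
  have hSJ : ∀ j ∈ S, j ∈ J := fun j hj => hS ▸ Submodule.subset_span hj
  refine ⟨g, g.2, ∏ j ∈ S, u j, ?_, fun j hj => ?_⟩
  · rw [hP.prod_mem_iff]
    rintro ⟨j, hj, hju⟩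
    exact huP j (hSJ j hj) hju
  · rw [← hS] at hj
    induction hj using Submodule.span_induction with
    | mem j hj => exact (hug j (hSJ j hj)).trans (mul_dvd_mul_right (Finset.dvd_prod_of_mem u hj) j)
    | zero => simp
    | add a b _ _ ha hb => rw [mul_add]; exact dvd_add ha hb
    | smul r a _ ha => rw [smul_eq_mul, mul_left_comm]; exact ha.mul_left r

/-- A single `γ ∈ J` generating `J` at all minimal primes of `yR`, with a common denominator. -/
theorem exists_common_generator {R : Type*} [CommRing R] [IsNoetherianRing R] [IsDomain R]
    [IsIntegrallyClosed R] (J : Ideal R) {y : R} (hy : y ≠ 0) :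
    ∃ γ ∈ J, ∃ y₂ : R, (∀ P ∈ (Ideal.span {y}).minimalPrimes, y₂ ∉ P) ∧ ∀ j ∈ J, γ ∣ y₂ * j := by
  classical
  have hfin : (Ideal.span {y}).minimalPrimes.Finite :=
    Ideal.finite_minimalPrimes_of_isNoetherianRing R _
  have hprime : ∀ P ∈ (Ideal.span {y}).minimalPrimes, P.IsPrime := fun P hP => hP.1.1
  have hloc : ∀ P ∈ (Ideal.span {y}).minimalPrimes, ∃ g ∈ J, ∃ u ∉ P, ∀ j ∈ J, g ∣ u * j :=
    fun P hP => exists_local_generator J hy hP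
  have he : ∀ P ∈ (Ideal.span {y}).minimalPrimes,
      ∃ e ∉ P, ∀ Q ∈ (Ideal.span {y}).minimalPrimes, Q ≠ P → e ∈ Q := by
    intro P hP
    have : ¬ (hfin.toFinset.erase P).inf id ≤ P := by
      rw [(hprime P hP).inf_le']
      rintro ⟨Q, hQ, hQP⟩
      rw [Finset.mem_erase, Set.Finite.mem_toFinset] at hQ
      exact hQ.1 (le_antisymm hQP (hP.2 hQ.2.1 hQP))
    obtain ⟨e, he, heP⟩ := SetLike.not_le_iff_exists.1 this
    refine ⟨e, heP, fun Q hQ hne => ?_⟩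
    exact (Finset.inf_le (f := id) (Finset.mem_erase.2 ⟨hne, hfin.mem_toFinset.2 hQ⟩) :
      (hfin.toFinset.erase P).inf id ≤ Q) he
  choose! g hgJ u huP hgu using hloc
  choose! e heP heQ using he
  set γ := ∑ P ∈ hfin.toFinset, e P * g P with hγ
  have hγJ : γ ∈ J := J.sum_mem fun P hP => J.mul_mem_left _ (hgJ P (hfin.mem_toFinset.1 hP))
  let C : Ideal R := (Ideal.span {γ}).colon (J : Set R)
  have hC : ∀ r, r ∈ C ↔ ∀ j ∈ J, γ ∣ r * j := fun r => by
    simp [C, Submodule.mem_colon, Ideal.mem_span_singleton]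
  have hCP : ∀ P ∈ (Ideal.span {y}).minimalPrimes, ¬ C ≤ P := by
    intro P hP hle
    have hPp := hprime P hP
    obtain ⟨k, hk⟩ : ∃ k : Ideal R → R, ∀ Q ∈ hfin.toFinset, u P * g Q = g P * k Q := by
      choose! k hk using hgu P hP
      exact ⟨fun Q => k (g Q), fun Q hQ => hk _ (hgJ Q (hfin.mem_toFinset.1 hQ))⟩
    -- In `R_P` one has `γ = g P * w / u P` with `w` a unit.
    set w := u P * e P + ∑ Q ∈ hfin.toFinset.erase P, e Q * k Q with hw
    have hwP : w ∉ P := by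
      intro hwP
      have hsum : ∑ Q ∈ hfin.toFinset.erase P, e Q * k Q ∈ P := P.sum_mem fun Q hQ => by
        rw [Finset.mem_erase, Set.Finite.mem_toFinset] at hQ
        exact P.mul_mem_right _ (heQ Q hQ.2 P hP hQ.1.symm)
      rcases hPp.mem_or_mem ((P.add_mem_iff_left hsum).1 hwP) with h | h
      exacts [huP P hP h, heP P hP h]
    have huγ : u P * γ = g P * w := by
      rw [hγ, hw, ← Finset.add_sum_erase _ _ (hfin.mem_toFinset.2 hP), mul_add, mul_add,
        Finset.mul_sum, Finset.mul_sum]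
      congr 1
      · ring
      · refine Finset.sum_congr rfl fun Q hQ => ?_
        linear_combination e Q * hk Q (Finset.mem_of_mem_erase hQ)
    have hmem : u P * (u P * w) ∈ C := (hC _).2 fun j hj => by
      obtain ⟨l, hl⟩ := hgu P hP j hj
      exact ⟨u P * u P * l, by linear_combination (u P * w) * hl - u P * l * huγ⟩
    rcases hPp.mem_or_mem (hle hmem) with h | h
    · exact huP P hP h
    · rcases hPp.mem_or_mem h with h | h
      exacts [huP P hP h, hwP h]
  have havoid : ¬ (C : Set R) ⊆ ⋃ P ∈ (Ideal.span {y}).minimalPrimes, (P : Set R) := by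
    intro hsub
    obtain ⟨P, hP, hle⟩ := (Ideal.subset_union_prime_finite hfin (f := id) 0 0
      fun P hP _ _ => hprime P hP).1 hsub
    exact hCP P hP hle
  obtain ⟨y₂, hy₂C, hy₂⟩ := Set.not_subset.1 havoid
  refine ⟨γ, hγJ, y₂, fun P hP h => hy₂ (Set.mem_biUnion hP h), (hC _).1 hy₂C⟩


/-- Let `R` be a Noetherian normal domain, let `J` be a nonzero ideal of
`R` of pure height one, and let `y₁` be a nonzero element of `J`. Then there exist an
element `y₂ ∈ R` that lies in no minimal prime of the ideal `y₁R`, and an element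
`γ ∈ J`, such that `y₂^i · J^{(i)} ⊆ γ^i R` for all positive integers `i`. -/
theorem stmt3 {R : Type*} [CommRing R] [IsNoetherianRing R] [IsDomain R]
    [IsIntegrallyClosed R]
    (J : Ideal R) (hJne : J ≠ ⊥) (hJ : IsPureHeightOne J)
    (y₁ : R) (hy₁ : y₁ ∈ J) (hy₁0 : y₁ ≠ 0) :
    ∃ y₂ γ : R, (∀ P ∈ (Ideal.span {y₁}).minimalPrimes, y₂ ∉ P) ∧ γ ∈ J ∧
      ∀ i : ℕ, 0 < i → ∀ x ∈ symbolicPower J i, y₂ ^ i * x ∈ Ideal.span {γ ^ i} := by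
  obtain ⟨γ, hγJ, y₂, hy₂, hdvd⟩ := exists_common_generator J hy₁0
  refine ⟨y₂, γ, hy₂, hγJ, fun i hi x hx => ?_⟩
  rw [Ideal.mem_span_singleton]
  by_cases hγ : γ = 0
  -- Then `y₂ * y₁ = 0`, which forces `y₂ = 0`; this happens only when `y₁` is a unit.
  · have h0 : y₂ * y₁ = 0 := by simpa [hγ] using hdvd y₁ hy₁
    simp [(mul_eq_zero.1 h0).resolve_right hy₁0, hi.ne']
  have hpow : ∀ z ∈ J ^ i, γ ^ i ∣ y₂ ^ i * z := by
    have hle : Ideal.span {y₂} * J ≤ Ideal.span {γ} := Ideal.mul_le.2 fun r hr j hj => by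
      obtain ⟨a, rfl⟩ := Ideal.mem_span_singleton.1 hr
      rw [Ideal.mem_span_singleton, mul_right_comm]
      exact (hdvd j hj).mul_right a
    intro z hz
    have := Ideal.pow_right_mono hle i
    rw [mul_pow, Ideal.span_singleton_pow, Ideal.span_singleton_pow] at this
    exact Ideal.mem_span_singleton.1
      (this (Ideal.mul_mem_mul (Ideal.mem_span_singleton_self _) hz))
  refine dvd_of_forall_height_one (pow_ne_zero i hγ) fun P hP hht => ?_
  have hxP := (Submodule.mem_sInf.1 hx) _ ⟨P, hP, hht, rfl⟩
  rw [Ideal.mem_comap, IsLocalization.algebraMap_mem_map_algebraMap_iff P.primeCompl] at hxP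
  obtain ⟨s, hs, hsx⟩ := hxP
  exact ⟨s, hs, by rw [mul_left_comm]; exact hpow _ hsx⟩
end

section
/- Let (R,m) be a Noetherian local ring and let y₁, …, y_d be a system of parameters for R that forms a regular sequence. Suppose s ∈ R is an element whose image generates the socle of R/(y₁, …, y_d), i.e., the colon ideal ((y₁, …, y_d) : m) is equal to (y₁, …, y_d) + sR and s ∉ (y₁, …, y_d). Then for every positive integer t, the element s·(y₁⋯y_d)^{t−1} generates the socle of R/(y₁^t, …, y_d^t): that is, ((y₁^t, …, y_d^t) : m) = (y₁^t, …, y_d^t) + s(y₁⋯y_d)^{t−1}R and s(y₁⋯y_d)^{t−1} ∉ (y₁^t, …, y_d^t). -/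
/-!
The exponents are raised one parameter at a time. Suppose `a ∈ m` is regular modulo an ideal `I` and
`s` generates the socle of `R/(I + aR)`. If `m z ⊆ I + a^(n+1)R`, then `a z ∈ I + a^(n+1)R`, and
cancelling `a` gives `z ∈ a^n w + I`; cancelling `a^n` from `m a^n w ⊆ I + a^(n+1)R` shows that `w` lies
in the socle of `R/(I + aR)`. Hence `s a^n` generates the socle of `R/(I + a^(n+1)R)`
(`GeneratesSocle.mul_pow`).

To apply this successively to `y₁, …, y_d`, each `y_j` must be regular modulo any ideal generated by
powers of other parameters. For first powers this is the permutability of regular sequences in a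
Noetherian local ring (`regularMod_span_image`); higher powers come from the fact that if `a` is
regular modulo `I` and `b` is regular modulo `I + aR`, then `b` is regular modulo `I + a^n R`
(`RegularMod.sup_pow`).
-/

namespace SocleOfPowers

variable {R : Type*} [CommRing R]

/-- The element `b` is a nonzerodivisor on `R/I`; the quotient is allowed to be zero. -/
def RegularMod (I : Ideal R) (b : R) : Prop := ∀ z, b * z ∈ I → z ∈ I

lemma mem_sup_singleton {I : Ideal R} {a z : R} :
    z ∈ I ⊔ Ideal.span {a} ↔ ∃ c, z - a * c ∈ I := by
  constructor
  · intro h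
    obtain ⟨i, hi, x, hx, rfl⟩ := Submodule.mem_sup.1 h
    obtain ⟨c, rfl⟩ := Ideal.mem_span_singleton'.1 hx
    exact ⟨c, by convert hi using 1; ring⟩
  · rintro ⟨c, hc⟩
    refine Submodule.mem_sup.2 ⟨_, hc, a * c, ?_, by ring⟩
    exact Ideal.mul_mem_right _ _ (Ideal.mem_span_singleton_self a)

lemma RegularMod.pow {I : Ideal R} {a : R} (h : RegularMod I a) (n : ℕ) :
    RegularMod I (a ^ n) := by
  induction n with
  | zero => intro z hz; simpa using hz
  | succ n ih =>
    intro z hz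
    exact h _ (ih _ (by convert hz using 1; ring))

lemma RegularMod.sup_pow {I : Ideal R} {a b : R} (ha : RegularMod I a)
    (hb : RegularMod (I ⊔ Ideal.span {a}) b) (n : ℕ) :
    RegularMod (I ⊔ Ideal.span {a ^ n}) b := by
  induction n with
  | zero => intro z _; simp
  | succ n ih =>
    intro z hz
    obtain ⟨c, hc⟩ := mem_sup_singleton.1 hz
    obtain ⟨w, hw⟩ := mem_sup_singleton.1 (hb z (mem_sup_singleton.2
      ⟨a ^ n * c, by convert hc using 1; ring⟩))
    -- Modulo `I`, `z = a w` and `b z = a^(n+1) c`, so `a` cancels from `a (b w - a^n c) ∈ I`.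
    have h1 : b * w - a ^ n * c ∈ I := by
      apply ha
      convert I.sub_mem hc (I.mul_mem_left b hw) using 1
      ring
    obtain ⟨v, hv⟩ := mem_sup_singleton.1 (ih w (mem_sup_singleton.2 ⟨c, h1⟩))
    refine mem_sup_singleton.2 ⟨v, ?_⟩
    convert I.add_mem hw (I.mul_mem_left a hv) using 1
    ring

/-- The image of `s` is a nonzero generator of the `m`-torsion `(I : m)/I` of `R/I`. -/
def GeneratesSocle (m I : Ideal R) (s : R) : Prop :=
  Submodule.colon I (m : Set R) = I ⊔ Ideal.span {s} ∧ s ∉ I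

/-- Raising one generator `a` to the power `n + 1` multiplies the socle generator by `a^n`. -/
lemma GeneratesSocle.mul_pow {m I : Ideal R} {a s : R} (ham : a ∈ m) (ha : RegularMod I a)
    (h : GeneratesSocle m (I ⊔ Ideal.span {a}) s) (n : ℕ) :
    GeneratesSocle m (I ⊔ Ideal.span {a ^ (n + 1)}) (s * a ^ n) := by
  obtain ⟨hcol, hs⟩ := h
  have cancel : ∀ x, a ^ n * x ∈ I ⊔ Ideal.span {a ^ (n + 1)} → x ∈ I ⊔ Ideal.span {a} := by
    intro x hx
    obtain ⟨c, hc⟩ := mem_sup_singleton.1 hx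
    exact mem_sup_singleton.2 ⟨c, ha.pow n _ (by convert hc using 1; ring)⟩
  have raise : ∀ x, x ∈ I ⊔ Ideal.span {a} → a ^ n * x ∈ I ⊔ Ideal.span {a ^ (n + 1)} := by
    intro x hx
    obtain ⟨c, hc⟩ := mem_sup_singleton.1 hx
    exact mem_sup_singleton.2 ⟨c, by convert I.mul_mem_left (a ^ n) hc using 1; ring⟩
  refine ⟨?_, fun hmem => hs (cancel s (by rwa [mul_comm]))⟩
  apply le_antisymm
  · intro z hz
    rw [Submodule.mem_colon] at hz
    obtain ⟨c, hc⟩ := mem_sup_singleton.1 (hz a ham)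
    have hzw : z - a ^ n * c ∈ I := by
      apply ha
      convert hc using 1
      simp only [smul_eq_mul]
      ring
    have hw : c ∈ Submodule.colon (I ⊔ Ideal.span {a}) (m : Set R) := by
      rw [Submodule.mem_colon]
      intro p hp
      apply cancel
      have h2 := Ideal.sub_mem _ (hz p hp)
        (Ideal.mem_sup_left (T := Ideal.span {a ^ (n + 1)}) (I.mul_mem_left p hzw))
      convert h2 using 1
      simp only [smul_eq_mul]
      ring
    rw [hcol] at hw
    obtain ⟨v, hv⟩ := mem_sup_singleton.1 hw
    refine mem_sup_singleton.2 ⟨v, ?_⟩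
    have h3 := Ideal.add_mem _ (Ideal.mem_sup_left (T := Ideal.span {a ^ (n + 1)}) hzw)
      (raise _ hv)
    convert h3 using 1
    ring
  · refine sup_le (fun x hx => ?_) ?_
    · rw [Submodule.mem_colon]
      exact fun p _ => Ideal.mul_mem_right _ _ hx
    · rw [Ideal.span_singleton_le_iff_mem, Submodule.mem_colon]
      intro p hp
      have h1 : s ∈ Submodule.colon (I ⊔ Ideal.span {a}) (m : Set R) := by
        rw [hcol]
        exact Ideal.mem_sup_right (Ideal.mem_span_singleton_self s)
      rw [Submodule.mem_colon] at h1
      convert raise _ (h1 p hp) using 1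
      simp only [smul_eq_mul]
      ring

/-- Every parameter is regular modulo any set of other parameters, since a regular sequence in a
Noetherian local ring may be reordered. -/
lemma regularMod_span_image [IsNoetherianRing R] [IsLocalRing R] {d : ℕ} {y : Fin d → R}
    (hreg : RingTheory.Sequence.IsRegular R (List.ofFn y))
    (S : Finset (Fin d)) {j : Fin d} (hj : j ∉ S) :
    RegularMod (Ideal.span (y '' S)) (y j) := by
  have hperm : (List.ofFn y).Perm
      ((S.toList.map y ++ [y j]) ++ ((insert j S)ᶜ).toList.map y) := by
    have h0 : (List.finRange d).Perm ((S.toList ++ [j]) ++ ((insert j S)ᶜ).toList) := by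
      apply (List.perm_ext_iff_of_nodup (List.nodup_finRange d) _).2
      · intro x
        simp
        tauto
      · simp only [List.nodup_append, Finset.nodup_toList, Finset.mem_toList, List.mem_append]
        simp
        grind
    have := h0.map y
    simpa [List.ofFn_eq_map] using this
  have h1 := (IsLocalRing.isRegular_of_perm hreg hperm).toIsWeaklyRegular
  rw [RingTheory.Sequence.isWeaklyRegular_append_iff,
    RingTheory.Sequence.isWeaklyRegular_append_iff,
    RingTheory.Sequence.isWeaklyRegular_singleton_iff] at h1
  have h2 := h1.1.2
  have hI : Ideal.ofList (S.toList.map y) • (⊤ : Submodule R R) = Ideal.span (y '' S) := by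
    rw [smul_eq_mul, Ideal.mul_top, Ideal.ofList]
    congr 1
    ext x
    simp
  rw [hI] at h2
  intro z hz
  rw [← Ideal.Quotient.eq_zero_iff_mem] at hz ⊢
  apply h2
  beta_reduce
  rw [smul_zero]
  exact hz

lemma span_image_insert {d : ℕ} (f : Fin d → R) (k : Fin d) (S : Finset (Fin d)) :
    Ideal.span (f '' ((insert k S : Finset (Fin d)) : Set (Fin d))) =
      Ideal.span (f '' S) ⊔ Ideal.span {f k} := by
  rw [Finset.coe_insert, Set.image_insert_eq, Ideal.span_insert, sup_comm]

/-- The set `B` collects the parameters raised to the `t`-th power; the ones in `A` are kept, which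
is what lets the induction move an element from `B` to `A`. -/
lemma regularMod_span_pow [IsNoetherianRing R] [IsLocalRing R] {d : ℕ} {y : Fin d → R}
    (hreg : RingTheory.Sequence.IsRegular R (List.ofFn y)) (t : ℕ)
    (B : Finset (Fin d)) : ∀ (A : Finset (Fin d)), Disjoint A B → ∀ j, j ∉ A → j ∉ B →
      RegularMod (Ideal.span (y '' A) ⊔ Ideal.span ((fun i => y i ^ t) '' B)) (y j) := by
  induction B using Finset.induction_on with
  | empty =>
    intro A _ j hA _
    simpa using regularMod_span_image hreg A hA
  | insert k B hk ih =>
    intro A hAB j hA hB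
    rw [Finset.disjoint_insert_right] at hAB
    rw [Finset.mem_insert, not_or] at hB
    rw [span_image_insert, ← sup_assoc]
    refine RegularMod.sup_pow (ih A hAB.2 k hAB.1 hk) ?_ t
    have h := ih (insert k A) (Finset.disjoint_insert_left.2 ⟨hk, hAB.2⟩) j
      (by simp [hA, hB.1]) hB.2
    rwa [span_image_insert, sup_right_comm] at h

/-- The socle generator after the parameters in `T` have been raised to the power `n + 1`, the others
being left unchanged. -/
lemma generatesSocle_partial [IsNoetherianRing R] [IsLocalRing R] {d : ℕ} {y : Fin d → R}
    (hy : ∀ i, y i ∈ IsLocalRing.maximalIdeal R)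
    (hreg : RingTheory.Sequence.IsRegular R (List.ofFn y)) {s : R}
    (h : GeneratesSocle (IsLocalRing.maximalIdeal R) (Ideal.span (Set.range y)) s) (n : ℕ)
    (T : Finset (Fin d)) :
    GeneratesSocle (IsLocalRing.maximalIdeal R)
      (Ideal.span (y '' (Tᶜ : Finset (Fin d))) ⊔ Ideal.span ((fun i => y i ^ (n + 1)) '' T))
      (s * ∏ i ∈ T, y i ^ n) := by
  induction T using Finset.induction_on with
  | empty => simpa using h
  | insert k T hk ih =>
    have hc : Tᶜ = insert k (insert k T)ᶜ := by
      ext x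
      simp
      grind
    rw [hc, span_image_insert, sup_right_comm] at ih
    have h1 := ih.mul_pow (hy k) (regularMod_span_pow hreg (n + 1) T (insert k T)ᶜ
      (by rw [Finset.disjoint_left]; intro x; simp) k (by simp) hk) n
    rw [span_image_insert, ← sup_assoc, Finset.prod_insert hk]
    convert h1 using 1
    ring

end SocleOfPowers

/-- Let `(R,m)` be a Noetherian local ring and let `y₁, …, y_d` be a system
of parameters for `R` that forms a regular sequence. Suppose `s ∈ R` is an element whose
image generates the socle of `R/(y₁, …, y_d)`, i.e. `((y₁, …, y_d) : m) = (y₁, …, y_d) + sR`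
and `s ∉ (y₁, …, y_d)`. Then for every positive integer `t`, the element
`s·(y₁⋯y_d)^{t−1}` generates the socle of `R/(y₁^t, …, y_d^t)`. -/
theorem stmt4 {R : Type*} [CommRing R] [IsNoetherianRing R] [IsLocalRing R]
    (d : ℕ) (hd : ringKrullDim R = d) (y : Fin d → R)
    (hy : ∀ i, y i ∈ IsLocalRing.maximalIdeal R)
    (hsop : (Ideal.span (Set.range y)).radical = IsLocalRing.maximalIdeal R)
    (hreg : RingTheory.Sequence.IsRegular R (List.ofFn y))
    (s : R)
    (hsoc : Submodule.colon (Ideal.span (Set.range y))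
        (IsLocalRing.maximalIdeal R)
      = Ideal.span (Set.range y) ⊔ Ideal.span {s})
    (hs : s ∉ Ideal.span (Set.range y)) :
    ∀ t : ℕ, 0 < t →
      Submodule.colon (Ideal.span (Set.range fun i => y i ^ t))
          (IsLocalRing.maximalIdeal R)
        = Ideal.span (Set.range fun i => y i ^ t)
            ⊔ Ideal.span {s * (∏ i, y i) ^ (t - 1)}
      ∧ s * (∏ i, y i) ^ (t - 1) ∉ Ideal.span (Set.range fun i => y i ^ t) := by
  intro t ht
  obtain ⟨n, rfl⟩ : ∃ n, t = n + 1 := ⟨t - 1, by lia⟩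
  have h := SocleOfPowers.generatesSocle_partial hy hreg ⟨hsoc, hs⟩ n Finset.univ
  simpa [SocleOfPowers.GeneratesSocle, Finset.prod_pow] using h
end

section
/- Let (R,m) be a Noetherian normal local domain, J an ideal of R of pure height one, and n ≥ 1 an integer such that J^{(n)} = αR is principal with α ≠ 0, while J^{(i)} is not principal for 0 < i < n. Let A be the subalgebra R[JT, J^{(2)}T², …] of the polynomial ring R[T] generated over R by all elements jT^i with j ∈ J^{(i)} and i ≥ 1, and let S = A/(αT^n − 1). Then the ideal 𝔪 of S generated by the images of m and of the sets J^{(i)}T^i for 0 < i < n is a maximal ideal of S, and 𝔪^n ⊆ mS. -/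
section SymbolicPower

variable {R : Type*} [CommRing R]

lemma mem_symbolicPower {J : Ideal R} {i : ℕ} {x : R} :
    x ∈ symbolicPower J i ↔ ∀ (P : Ideal R) (hP : P.IsPrime),
      Order.height (⟨P, hP⟩ : PrimeSpectrum R) = 1 →
      algebraMap R (Localization (@Ideal.primeCompl R _ P hP)) x ∈
        Ideal.map (algebraMap R (Localization (@Ideal.primeCompl R _ P hP))) (J ^ i) := by
  unfold symbolicPower
  rw [Ideal.mem_sInf]
  constructor
  · intro h P hP hh
    exact h ⟨P, hP, hh, rfl⟩
  · rintro h I ⟨P, hP, hh, rfl⟩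
    exact h P hP hh

lemma symbolicPower_zero (J : Ideal R) (x : R) : x ∈ symbolicPower J 0 := by
  rw [mem_symbolicPower]
  intro P hP _
  exact Ideal.mem_map_of_mem _ (by simp)

lemma pow_le_symbolicPower (J : Ideal R) (i : ℕ) : J ^ i ≤ symbolicPower J i := by
  intro x hx
  rw [mem_symbolicPower]
  intro P hP _
  exact Ideal.mem_map_of_mem _ hx

lemma mul_mem_symbolicPower {J : Ideal R} {i j : ℕ} {x y : R} (hx : x ∈ symbolicPower J i)
    (hy : y ∈ symbolicPower J j) : x * y ∈ symbolicPower J (i + j) := by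
  rw [mem_symbolicPower] at *
  intro P hP hh
  rw [map_mul, pow_add, Ideal.map_mul]
  exact Ideal.mul_mem_mul (hx P hP hh) (hy P hP hh)

lemma prod_mem_symbolicPower {ι : Type*} {J : Ideal R} (t : Finset ι) (d : ι → ℕ) (c : ι → R)
    (h : ∀ i ∈ t, c i ∈ symbolicPower J (d i)) :
    ∏ i ∈ t, c i ∈ symbolicPower J (∑ i ∈ t, d i) := by
  classical
  induction t using Finset.induction_on with
  | empty => exact symbolicPower_zero J _
  | insert b s hb ih =>
    rw [Finset.prod_insert hb, Finset.sum_insert hb]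
    exact mul_mem_symbolicPower (h b (by simp)) (ih fun i hi => h i (by simp [hi]))

variable [IsDomain R]

/-- Multiplication by `α` maps `J⁽ⁱ⁾` onto `J⁽ⁿ⁺ⁱ⁾`: the quotient `x / α` exists in `R` because
`J⁽ⁿ⁺ⁱ⁾ ⊆ J⁽ⁿ⁾`, and it lies in `J⁽ⁱ⁾` by cancelling `α` in each `R_P`. -/
lemma exists_eq_mul_of_mem_symbolicPower_add {J : Ideal R} {n : ℕ} {α : R} (hα : α ≠ 0)
    (hJn : symbolicPower J n = Ideal.span {α}) {i : ℕ} {x : R}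
    (hx : x ∈ symbolicPower J (n + i)) : ∃ y ∈ symbolicPower J i, x = α * y := by
  have hxn : x ∈ symbolicPower J n := by
    rw [mem_symbolicPower] at *
    intro P hP hh
    exact Ideal.map_mono (Ideal.pow_le_pow_right (Nat.le_add_right n i)) (hx P hP hh)
  rw [hJn, Ideal.mem_span_singleton'] at hxn
  obtain ⟨y, rfl⟩ := hxn
  refine ⟨y, ?_, mul_comm _ _⟩
  rw [mem_symbolicPower] at *
  intro P hP hh
  have hle : Ideal.map (algebraMap R (Localization (@Ideal.primeCompl R _ P hP))) (J ^ n) ≤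
      Ideal.span {algebraMap R (Localization (@Ideal.primeCompl R _ P hP)) α} := by
    rw [← Set.image_singleton, ← Ideal.map_span, ← hJn]
    exact Ideal.map_mono (pow_le_symbolicPower J n)
  have hmem := hx P hP hh
  rw [pow_add, Ideal.map_mul] at hmem
  have hmem2 := Ideal.mul_mono_left hle hmem
  rw [Ideal.mem_span_singleton_mul] at hmem2
  obtain ⟨z, hz, hzx⟩ := hmem2
  have hdom : IsDomain (Localization (@Ideal.primeCompl R _ P hP)) :=
    IsLocalization.isDomain_localization (Ideal.primeCompl_le_nonZeroDivisors P)
  have hα' : algebraMap R (Localization (@Ideal.primeCompl R _ P hP)) α ≠ 0 := by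
    intro h0
    exact hα ((IsLocalization.injective (Localization (@Ideal.primeCompl R _ P hP))
      (Ideal.primeCompl_le_nonZeroDivisors P)) (by rw [h0, map_zero]))
  rw [map_mul, mul_comm (algebraMap R _ y)] at hzx
  rw [← mul_left_cancel₀ hα' hzx]
  exact hz

lemma exists_eq_pow_mul {J : Ideal R} {n : ℕ} {α : R} (hα : α ≠ 0)
    (hJn : symbolicPower J n = Ideal.span {α}) (k : ℕ) {x : R}
    (hx : x ∈ symbolicPower J (n * k)) : ∃ r, x = α ^ k * r := by
  induction k generalizing x with
  | zero => exact ⟨x, by simp⟩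
  | succ k ih =>
    rw [Nat.mul_succ, add_comm] at hx
    obtain ⟨y, hy, rfl⟩ := exists_eq_mul_of_mem_symbolicPower_add hα hJn hx
    obtain ⟨r, rfl⟩ := ih hy
    exact ⟨r, by ring⟩

/-- A product of total degree `nk` of elements of non-principal symbolic powers lies in `αᵏm`.
Otherwise it generates `αᵏR`, and cancelling the other factors shows that the
`b`-th factor `c b` generates `J⁽ᵈ⁾`, `d = d b`. -/
lemma prod_mem_maximalIdeal [IsLocalRing R] {ι : Type*} {J : Ideal R} {n : ℕ} {α : R}
    (hα : α ≠ 0) (hJn : symbolicPower J n = Ideal.span {α}) (t : Finset ι) (ht : t.Nonempty)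
    (d : ι → ℕ) (c : ι → R) (h : ∀ i ∈ t, c i ∈ symbolicPower J (d i))
    (hd : ∀ i ∈ t, ¬ (symbolicPower J (d i)).IsPrincipal) (k : ℕ) (hk : ∑ i ∈ t, d i = n * k) :
    ∃ r ∈ IsLocalRing.maximalIdeal R, ∏ i ∈ t, c i = α ^ k * r := by
  classical
  obtain ⟨b, hb⟩ := ht
  have hrest := prod_mem_symbolicPower (t.erase b) d c
    (fun i hi => h i (Finset.mem_of_mem_erase hi))
  have hsum := Finset.add_sum_erase t d hb
  have hprod := Finset.mul_prod_erase t c hb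
  rw [hk] at hsum
  set e := ∑ i ∈ t.erase b, d i
  set q := ∏ i ∈ t.erase b, c i
  have hdiv : ∀ y ∈ symbolicPower J (d b), ∃ r, y * q = α ^ k * r := by
    intro y hy
    apply exists_eq_pow_mul hα hJn
    rw [← hsum]
    exact mul_mem_symbolicPower hy hrest
  obtain ⟨r, hr⟩ := hdiv _ (h b hb)
  rw [← hprod]
  refine ⟨r, ?_, hr⟩
  rw [IsLocalRing.mem_maximalIdeal, mem_nonunits_iff]
  rintro ⟨u, rfl⟩
  have hq : q ≠ 0 := by
    intro h0
    rw [h0, mul_zero] at hr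
    exact mul_ne_zero (pow_ne_zero k hα) u.ne_zero hr.symm
  apply hd b hb
  refine ⟨⟨c b, ?_⟩⟩
  apply le_antisymm
  · intro y hy
    obtain ⟨s, hs⟩ := hdiv y hy
    rw [← Ideal.span, Ideal.mem_span_singleton']
    refine ⟨s * (↑u⁻¹ : R), mul_right_cancel₀ hq ?_⟩
    calc s * (↑u⁻¹ : R) * c b * q = s * (↑u⁻¹ : R) * (c b * q) := by ring
      _ = α ^ k * s * (u * (↑u⁻¹ : R)) := by rw [hr]; ring
      _ = y * q := by rw [Units.mul_inv, mul_one, hs]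
  · rw [← Ideal.span, Ideal.span_singleton_le_iff_mem]
    exact h b hb

end SymbolicPower

/-- Among `n ≥ 1` natural numbers, some nonempty subfamily has sum divisible by `n`: two of the
`n + 1` partial sums agree modulo `n`. -/
lemma exists_subset_sum_dvd (n : ℕ) (hn : 1 ≤ n) (d : Fin n → ℕ) :
    ∃ t : Finset (Fin n), t.Nonempty ∧ n ∣ ∑ i ∈ t, d i := by
  let F : ℕ → Finset (Fin n) := fun b => Finset.univ.filter fun i => (i : ℕ) < b
  obtain ⟨x, hx, y, hy, hxy, heq⟩ := Finset.exists_ne_map_eq_of_card_lt_of_maps_to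
    (s := Finset.range (n + 1)) (t := Finset.range n) (by simp)
    (f := fun b => (∑ i ∈ F b, d i) % n)
    (fun b _ => by simpa using Nat.mod_lt _ hn)
  wlog hlt : x < y generalizing x y
  · exact this y hy x hx hxy.symm heq.symm (by omega)
  have hsub : F x ⊆ F y := by
    intro i hi
    simp only [F, Finset.mem_filter, Finset.mem_univ, true_and] at *
    omega
  refine ⟨F y \ F x, ⟨⟨x, by simp at hy; omega⟩, by simp [F, hlt]⟩, ?_⟩
  have hs := Finset.sum_sdiff (f := d) hsub
  have hdvd := (Nat.modEq_iff_dvd' (by omega)).1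
    (show (∑ i ∈ F x, d i) ≡ (∑ i ∈ F y, d i) [MOD n] from heq)
  rwa [← hs, Nat.add_sub_cancel] at hdvd

open Polynomial in
/-- The statement for any presentation `π : A → S` of the quotient `A / (αTⁿ - 1)`; working with
an abstract commutative ring `S` hides the ring structure on the quotient. -/
theorem isMaximal_and_pow_le {R : Type*} [CommRing R] [IsLocalRing R] [IsDomain R]
    (J : Ideal R)
    (n : ℕ) (hn : 1 ≤ n) (α : R) (hα : α ≠ 0)
    (hJn : symbolicPower J n = Ideal.span {α})
    (hnotprin : ∀ i : ℕ, 0 < i → i < n → ¬ (symbolicPower J i).IsPrincipal)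
    (A : Subalgebra R (Polynomial R))
    (hA : A = Algebra.adjoin R {f : Polynomial R | ∃ i : ℕ, 1 ≤ i ∧
      ∃ j ∈ symbolicPower J i, f = C j * X ^ i})
    (a : A) (ha : (a : Polynomial R) = C α * X ^ n - 1)
    {S : Type*} [CommRing S] (π : A →+* S) (hsurj : Function.Surjective π)
    (hker : ∀ x, π x = 0 ↔ x ∈ Ideal.span {a})
    (𝔪 M : Ideal S)
    (h𝔪 : 𝔪 = Ideal.span {z : S | ∃ x : A, π x = z ∧
      ((∃ r ∈ IsLocalRing.maximalIdeal R, (x : Polynomial R) = C r) ∨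
        (∃ i : ℕ, 0 < i ∧ i < n ∧ ∃ j ∈ symbolicPower J i,
          (x : Polynomial R) = C j * X ^ i))})
    (hM : M = Ideal.span {z : S | ∃ r ∈ IsLocalRing.maximalIdeal R,
        z = π (algebraMap R A r)}) :
    𝔪.IsMaximal ∧ 𝔪 ^ n ≤ M := by
  have hcoe : ∀ r : R, ((algebraMap R A r : A) : Polynomial R) = C r := fun r => rfl
  -- `a + 1` is the element `αTⁿ` of `A`, which becomes `1` in `S`.
  have hone : π (a + 1) = 1 := by
    rw [map_add, map_one, (hker a).2 (Ideal.mem_span_singleton_self a), zero_add]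
  have hone' : ((a + 1 : A) : Polynomial R) = C α * X ^ n := by
    push_cast
    rw [ha]; ring
  have hred : ∀ (k : ℕ) (r : R) (x : A), (x : Polynomial R) = C (α ^ k * r) * X ^ (n * k) →
      π x = π (algebraMap R A r) := by
    intro k r x hx
    have : x = (a + 1) ^ k * algebraMap R A r := by
      apply Subtype.ext
      rw [hx]
      push_cast [hcoe, hone']
      simp only [C_mul, C_pow]
      ring
    rw [this, map_mul, map_pow, hone, one_pow, one_mul]
  have hgenA : ∀ (i : ℕ) (j : R), j ∈ symbolicPower J i → C j * X ^ i ∈ A := by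
    intro i j hj
    rcases Nat.eq_zero_or_pos i with rfl | hi
    · rw [pow_zero, mul_one]
      exact A.algebraMap_mem j
    · rw [hA]
      exact Algebra.subset_adjoin ⟨i, hi, j, hj, rfl⟩
  have hm𝔪 : ∀ r ∈ IsLocalRing.maximalIdeal R, π (algebraMap R A r) ∈ 𝔪 := by
    intro r hr
    rw [h𝔪]
    exact Ideal.subset_span ⟨_, rfl, Or.inl ⟨r, hr, rfl⟩⟩
  have hpow : 𝔪 ^ n ≤ M := by
    rw [h𝔪, Ideal.span, Submodule.span_pow, ← Ideal.span, Ideal.span_le]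
    intro z hz
    rw [Set.mem_pow] at hz
    obtain ⟨f, rfl⟩ := hz
    rw [List.prod_ofFn]
    choose x hxf hx using fun i => (f i).2
    by_cases hex : ∃ i, ∃ r ∈ IsLocalRing.maximalIdeal R, (x i : Polynomial R) = C r
    · obtain ⟨i, r, hr, hxr⟩ := hex
      rw [SetLike.mem_coe, ← Finset.mul_prod_erase Finset.univ _ (Finset.mem_univ i)]
      rw [hM]
      refine Ideal.mul_mem_right _ _ (Ideal.subset_span ⟨r, hr, ?_⟩)
      rw [← hxf i]
      congr 1
      exact Subtype.ext hxr
    · push Not at hex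
      have hx' : ∀ i, ∃ d : ℕ, 0 < d ∧ d < n ∧ ∃ j ∈ symbolicPower J d,
          (x i : Polynomial R) = C j * X ^ d := by
        intro i
        rcases hx i with ⟨r, hr, h⟩ | h
        · exact absurd h (hex i r hr)
        · exact h
      choose d hd0 hdn c hc hxc using hx'
      obtain ⟨t, ht, k, hk⟩ := exists_subset_sum_dvd n hn d
      obtain ⟨r, hr, hprod⟩ := prod_mem_maximalIdeal hα hJn t ht d c (fun i _ => hc i)
        (fun i _ => hnotprin _ (hd0 i) (hdn i)) k hk
      rw [SetLike.mem_coe, ← Finset.prod_mul_prod_compl t]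
      rw [hM]
      refine Ideal.mul_mem_right _ _ (Ideal.subset_span ⟨r, hr, ?_⟩)
      rw [← hred k r (∏ i ∈ t, x i), map_prod]
      · exact Finset.prod_congr rfl fun i _ => (hxf i).symm
      · rw [← hprod, ← hk]
        push_cast
        rw [Finset.prod_congr rfl fun i _ => hxc i, Finset.prod_mul_distrib, map_prod,
          Finset.prod_pow_eq_pow_sum]
  -- Induction principle: `S` is generated as a ring by the classes of `jTⁱ` and by `R`.
  have hind : ∀ (p : S → Prop),
      (∀ (i : ℕ) (j : R) (hj : j ∈ symbolicPower J i), p (π ⟨C j * X ^ i, hgenA i j hj⟩)) →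
      (∀ r : R, p (π (algebraMap R A r))) →
      (∀ s s', p s → p s' → p (s + s')) → (∀ s s', p s → p s' → p (s * s')) → ∀ s, p s := by
    intro p hgen halg hadd hmul s
    obtain ⟨x, rfl⟩ := hsurj s
    suffices H : ∀ (f : Polynomial R) (hf : f ∈ Algebra.adjoin R {f : Polynomial R | ∃ i : ℕ,
        1 ≤ i ∧ ∃ j ∈ symbolicPower J i, f = C j * X ^ i}), ∀ hfA : f ∈ A, p (π ⟨f, hfA⟩) from
      H x (hA ▸ x.2) x.2
    intro f hf
    induction hf using Algebra.adjoin_induction with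
    | mem f hf =>
      obtain ⟨i, -, j, hj, rfl⟩ := hf
      intro _
      exact hgen i j hj
    | algebraMap r => intro _; exact halg r
    | add f g hf hg ihf ihg =>
      intro _
      have h := hadd _ _ (ihf (hA ▸ hf)) (ihg (hA ▸ hg))
      rwa [← map_add] at h
    | mul f g hf hg ihf ihg =>
      intro _
      have h := hmul _ _ (ihf (hA ▸ hf)) (ihg (hA ▸ hg))
      rwa [← map_mul] at h
  have hspan : ∀ s, ∃ r : R, s - π (algebraMap R A r) ∈ 𝔪 := by
    apply hind
    · intro i
      induction i using Nat.strong_induction_on with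
      | _ i ih =>
      intro j hj
      rcases Nat.eq_zero_or_pos i with rfl | hi
      · refine ⟨j, ?_⟩
        rw [hred 0 j ⟨C j * X ^ 0, hgenA 0 j hj⟩ (by simp), sub_self]
        exact zero_mem _
      rcases lt_or_ge i n with hin | hin
      · refine ⟨0, ?_⟩
        rw [map_zero, map_zero, sub_zero, h𝔪]
        exact Ideal.subset_span ⟨_, rfl, Or.inr ⟨i, hi, hin, j, hj, rfl⟩⟩
      · obtain ⟨e, rfl⟩ := Nat.exists_eq_add_of_le hin
        obtain ⟨y, hy, rfl⟩ := exists_eq_mul_of_mem_symbolicPower_add hα hJn hj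
        have : (⟨C (α * y) * X ^ (n + e), hgenA _ _ hj⟩ : A) =
            (a + 1) * ⟨C y * X ^ e, hgenA _ _ hy⟩ := by
          apply Subtype.ext
          rw [MulMemClass.coe_mul, hone']
          simp only [C_mul]
          ring
        rw [this, map_mul, hone, one_mul]
        exact ih e (by omega) y hy
    · intro r
      exact ⟨r, by rw [sub_self]; exact zero_mem _⟩
    · rintro s s' ⟨r, hr⟩ ⟨r', hr'⟩
      refine ⟨r + r', ?_⟩
      convert add_mem hr hr' using 1
      rw [map_add, map_add]; ring
    · rintro s s' ⟨r, hr⟩ ⟨r', hr'⟩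
      refine ⟨r * r', ?_⟩
      convert add_mem (Ideal.mul_mem_right s' _ hr)
        (Ideal.mul_mem_left _ (π (algebraMap R A r)) hr') using 1
      rw [map_mul, map_mul]; ring
  have hint : (π.comp (algebraMap R A)).IsIntegral := by
    intro s
    revert s
    apply hind
    · intro i j hj
      have hjn : j ^ n ∈ symbolicPower J (n * i) := by
        have := prod_mem_symbolicPower (Finset.range n) (fun _ => i) (fun _ => j) (fun _ _ => hj)
        simpa using this
      obtain ⟨r, hr⟩ := exists_eq_pow_mul hα hJn i hjn
      -- The `n`-th power of `jTⁱ` is the scalar `r = jⁿ / αⁱ`.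
      have hpw : (π ⟨C j * X ^ i, hgenA i j hj⟩) ^ n = (π.comp (algebraMap R A)) r := by
        rw [← map_pow]
        apply hred i r
        rw [← hr]
        push_cast
        rw [mul_pow, C_pow, ← pow_mul, mul_comm i n]
      refine ⟨X ^ n - C r, monic_X_pow_sub_C r (by omega), ?_⟩
      rw [eval₂_sub, eval₂_pow, eval₂_X, eval₂_C, hpw, sub_self]
    · intro r
      exact RingHom.isIntegralElem_map (π.comp (algebraMap R A))
    · intro s s' hs hs'
      exact RingHom.IsIntegralElem.add _ hs hs'
    · intro s s' hs hs'
      exact RingHom.IsIntegralElem.mul _ hs hs'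
  have hinj : Function.Injective (π.comp (algebraMap R A)) := by
    rw [injective_iff_map_eq_zero]
    intro r hr
    rw [RingHom.comp_apply, hker, Ideal.mem_span_singleton'] at hr
    obtain ⟨b, hb⟩ := hr
    have hb' : (b : Polynomial R) * (C α * X ^ n - 1) = C r := by
      rw [← ha, ← hcoe, ← hb, MulMemClass.coe_mul]
    have hdeg : (C α * X ^ n - 1 : Polynomial R).natDegree = n := by
      rw [← C_1, natDegree_sub_C, natDegree_C_mul_X_pow n α hα]
    by_contra hr0
    have hb0 : (b : Polynomial R) ≠ 0 := by
      intro h0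
      rw [h0, zero_mul] at hb'
      exact hr0 (C_eq_zero.1 hb'.symm)
    have h1 : (C α * X ^ n - 1 : Polynomial R) ≠ 0 := by
      intro h0
      rw [h0, natDegree_zero] at hdeg
      omega
    have := congrArg natDegree hb'
    rw [natDegree_mul hb0 h1, hdeg, natDegree_C] at this
    omega
  have hMtop : M ≠ ⊤ := by
    let _ : Algebra R (S) := (π.comp (algebraMap R A)).toAlgebra
    have _ : Algebra.IsIntegral R (S) := ⟨hint⟩
    obtain ⟨Q, hQ, hQm⟩ := Ideal.exists_ideal_over_maximal_of_isIntegral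
      (S := S) (IsLocalRing.maximalIdeal R)
      (by
        intro r hr
        have : r = 0 := (injective_iff_map_eq_zero _).1 hinj r hr
        rw [this]; exact zero_mem _)
    intro htop
    apply hQ.ne_top
    rw [eq_top_iff, ← htop, hM, Ideal.span_le]
    rintro z ⟨r, hr, rfl⟩
    rw [← hQm] at hr
    exact hr
  have h𝔪top : 𝔪 ≠ ⊤ := by
    intro h
    rw [h, Ideal.top_pow] at hpow
    exact hMtop (top_le_iff.1 hpow)
  refine ⟨?_, hpow⟩
  rw [Ideal.isMaximal_iff]
  refine ⟨fun h => h𝔪top ((Ideal.eq_top_iff_one _).2 h), ?_⟩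
  intro I x hI hx hxI
  obtain ⟨r, hr⟩ := hspan x
  have hunit : IsUnit r := by
    by_contra hnu
    apply hx
    have := add_mem hr (hm𝔪 r ((IsLocalRing.mem_maximalIdeal r).2 hnu))
    rwa [sub_add_cancel] at this
  have hrI : π (algebraMap R A r) ∈ I := by
    have := sub_mem hxI (hI hr)
    rwa [sub_sub_cancel] at this
  exact (Ideal.eq_top_iff_one _).1
    (Ideal.eq_top_of_isUnit_mem _ hrI ((hunit.map (algebraMap R A)).map π))

set_option synthInstance.maxHeartbeats 1000000 in
set_option maxHeartbeats 1000000 in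
open Polynomial in
/-- Let `(R,m)` be a Noetherian normal local domain, `J` an ideal of pure
height one, and `n ≥ 1` such that `J^{(n)} = αR` is principal with `α ≠ 0`, while
`J^{(i)}` is not principal for `0 < i < n`. Let `A = R[JT, J^{(2)}T², …] ⊆ R[T]` and
`S = A/(αTⁿ − 1)`. Then the ideal `𝔪` of `S` generated by the images of `m` and of the
sets `J^{(i)}Tⁱ` for `0 < i < n` is a maximal ideal of `S`, and `𝔪ⁿ ⊆ mS`. -/
theorem stmt6 {R : Type*} [CommRing R] [IsNoetherianRing R] [IsLocalRing R] [IsDomain R]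
    [IsIntegrallyClosed R]
    (J : Ideal R) (hJ : IsPureHeightOne J)
    (n : ℕ) (hn : 1 ≤ n) (α : R) (hα : α ≠ 0)
    (hJn : symbolicPower J n = Ideal.span {α})
    (hnotprin : ∀ i : ℕ, 0 < i → i < n → ¬ (symbolicPower J i).IsPrincipal)
    (A : Subalgebra R (Polynomial R))
    (hA : A = Algebra.adjoin R {f : Polynomial R | ∃ i : ℕ, 1 ≤ i ∧
      ∃ j ∈ symbolicPower J i, f = C j * X ^ i})
    (a : A) (ha : (a : Polynomial R) = C α * X ^ n - 1)
    (𝔪 : Ideal (A ⧸ Ideal.span {a}))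
    (h𝔪 : 𝔪 = Ideal.span {z : A ⧸ Ideal.span {a} | ∃ x : A,
      Ideal.Quotient.mk (Ideal.span {a}) x = z ∧
      ((∃ r ∈ IsLocalRing.maximalIdeal R, (x : Polynomial R) = C r) ∨
        (∃ i : ℕ, 0 < i ∧ i < n ∧ ∃ j ∈ symbolicPower J i,
          (x : Polynomial R) = C j * X ^ i))}) :
    𝔪.IsMaximal ∧
      𝔪 ^ n ≤ Ideal.span {z : A ⧸ Ideal.span {a} | ∃ r ∈ IsLocalRing.maximalIdeal R,
        z = Ideal.Quotient.mk (Ideal.span {a}) (algebraMap R A r)} := by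
  have hsurj : Function.Surjective (Ideal.Quotient.mk (Ideal.span {a})) :=
    Ideal.Quotient.mk_surjective
  have hker : ∀ x, Ideal.Quotient.mk (Ideal.span {a}) x = 0 ↔ x ∈ Ideal.span {a} :=
    fun x => Ideal.Quotient.eq_zero_iff_mem
  -- The arguments are supplied in stages: elaborating them at once makes the comparison of the
  -- two ring structures on the quotient of `A` (as `Ring` and as `CommRing`) very slow.
  have key := isMaximal_and_pow_le J n hn α hα hJn hnotprin A hA a ha (S := A ⧸ Ideal.span {a})
    (Ideal.Quotient.mk (Ideal.span {a})) hsurj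
  have key' := key hker
  have key'' := key' 𝔪 _ h𝔪 rfl
  exact key''
end
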